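/- arXiv:1503.06826 — 4 statements merged into one kernel-verified Lean document; each statement's English description precedes it below -/
import Mathlib

section
/- Let G be a finite concurrent game such that for every player A and all plays ρ, ρ', if Occ(ρ) = Occ(ρ') and Inf(ρ) = Inf(ρ') then ρ ∼_A ρ'. Then for every state s and play ρ: if there is a Nash equilibrium from s with outcome ρ, then there is a Nash equilibrium from s whose outcome ρ' has the lasso form ρ' = π·τ^ω for finite sequences π and τ each of length at most |Stat|², and ρ ∼_A ρ' for every player A. -/
/-- A concurrent game: states, players, actions, allowed actions (nonempty),
a deterministic transition table, and a preference relation for each player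
(intended to be a preorder on plays, i.e. on `ℕ → Stat`). -/
structure ConcGame (Stat Agt Act : Type) where
  Allow : Stat → Agt → Set Act
  Allow_nonempty : ∀ s A, (Allow s A).Nonempty
  Tab : Stat → (Agt → Act) → Stat
  pref : Agt → (ℕ → Stat) → (ℕ → Stat) → Prop

namespace ConcGame

variable {Stat Agt Act : Type}

/-- A move is legal at a state if every player's action is allowed there. -/
def Legal (G : ConcGame Stat Agt Act) (s : Stat) (m : Agt → Act) : Prop :=
  ∀ A, m A ∈ G.Allow s A

/-- A strategy for player `A` maps a history (the list of previously visited
states) together with the current state to an allowed action. -/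
def IsStrategy (G : ConcGame Stat Agt Act) (A : Agt) (σ : List Stat → Stat → Act) : Prop :=
  ∀ h s, σ h s ∈ G.Allow s A

/-- A strategy profile assigns a strategy to every player. -/
def IsProfile (G : ConcGame Stat Agt Act) (σ : Agt → List Stat → Stat → Act) : Prop :=
  ∀ A, G.IsStrategy A (σ A)

/-- The run of a strategy profile from a state: current state together with
the history of previously visited states. -/
def run (G : ConcGame Stat Agt Act) (σ : Agt → List Stat → Stat → Act) (s : Stat) :
    ℕ → Stat × List Stat
  | 0 => (s, [])
  | n + 1 =>
    let p := run G σ s n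
    (G.Tab p.1 (fun A => σ A p.2 p.1), p.2 ++ [p.1])

/-- The unique infinite outcome of a strategy profile from a state. -/
def outcome (G : ConcGame Stat Agt Act) (σ : Agt → List Stat → Stat → Act) (s : Stat)
    (n : ℕ) : Stat :=
  (run G σ s n).1

/-- Nash equilibrium from `s`: no player can unilaterally improve her outcome. -/
def IsNash [DecidableEq Agt] (G : ConcGame Stat Agt Act) (s : Stat)
    (σ : Agt → List Stat → Stat → Act) : Prop :=
  G.IsProfile σ ∧
    ∀ A τ, G.IsStrategy A τ →
      G.pref A (G.outcome (Function.update σ A τ) s) (G.outcome σ s)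

end ConcGame

/-- The set of states occurring along a play. -/
def Occ {α : Type} (ρ : ℕ → α) : Set α := Set.range ρ

/-- The set of states occurring infinitely often along a play. -/
def InfOcc {α : Type} (ρ : ℕ → α) : Set α := {x | ∀ n, ∃ m, n ≤ m ∧ ρ m = x}

/-!
Record along the equilibrium outcome `ρ` the current state together with the set of states visited
so far. The visited sets form a chain, so at most `|Stat|²` such snapshots occur, and erasing loops
in the sequence of snapshots shortens the prefix of `ρ` up to a position `J`, by which every state
of `ρ` has been visited and after which only states of `InfOcc ρ` occur, to at most `|Stat|²`
states. The same shortening, applied to a later segment that visits all of `InfOcc ρ` and returns to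
the state where it starts, yields a cycle. The resulting lasso has the form `ρ ∘ F`, where `ρ` has
the same state at `F (n + 1)` as at `F n + 1`, and `ρ ∘ F` has visited by time `n` exactly the
states that `ρ` has visited by time `F n`.

Along this lasso the players use `σ` on translated histories. A play `o` that leaves the lasso after
time `n` by a deviation of one player turns into a deviation from `σ` that follows `ρ` up to time
`F n` and then continues like `o`. The two plays have the same `Occ` and `InfOcc`, so the deviation
is no more profitable against the translated strategies than against `σ`.
-/

section Play

open Set Filter

section Splice

variable {α κ : Type*} {u v : ℕ → α}

/-- The history of the first `n` states of the play `ρ`, its `n`-th state excluded. -/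
def hist (ρ : ℕ → α) (n : ℕ) : List α := (List.range n).map ρ

theorem length_hist (ρ : ℕ → α) (n : ℕ) : (hist ρ n).length = n := by simp [hist]

theorem getD_hist (ρ : ℕ → α) {n m : ℕ} (h : n < m) (x : α) :
    (hist ρ m).getD n x = ρ n := by
  simp [hist, h]

theorem hist_add (ρ : ℕ → α) (m n : ℕ) :
    hist ρ (m + n) = hist ρ m ++ hist (fun k => ρ (m + k)) n := by
  simp [hist, List.range_add, Function.comp_def]

theorem hist_succ (ρ : ℕ → α) (n : ℕ) : hist ρ (n + 1) = hist ρ n ++ [ρ n] := by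
  simp [hist, List.range_succ]

theorem hist_congr {n : ℕ} (h : ∀ i < n, u i = v i) : hist u n = hist v n :=
  List.map_congr_left fun i hi => h i (List.mem_range.1 hi)

theorem hist_isPrefix_hist_iff {m n : ℕ} (hmn : m ≤ n) :
    hist u m <+: hist v n ↔ ∀ i < m, u i = v i := by
  simp [List.prefix_iff_getElem, hist, hmn]

theorem exists_last_agreement (h₀ : u 0 = v 0) (hne : u ≠ v) :
    ∃ n, (∀ i ≤ n, u i = v i) ∧ u (n + 1) ≠ v (n + 1) := by
  classical
  have hex : ∃ n, u n ≠ v n := Function.ne_iff.1 hne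
  obtain ⟨n, hn⟩ : ∃ n, Nat.find hex = n + 1 := Nat.exists_eq_succ_of_ne_zero fun h =>
    Nat.find_spec hex (h ▸ h₀)
  exact ⟨n, fun i hi => not_not.1 (Nat.find_min hex (by omega)), hn ▸ Nat.find_spec hex⟩

/-- The play that follows `u` for `m` steps and then continues as `v`, which it starts from its
beginning. -/
def splice (u : ℕ → α) (m : ℕ) (v : ℕ → α) (n : ℕ) : α := if n < m then u n else v (n - m)

theorem splice_of_lt {m n : ℕ} (h : n < m) : splice u m v n = u n := if_pos h

theorem splice_add (u : ℕ → α) (m : ℕ) (v : ℕ → α) (k : ℕ) : splice u m v (m + k) = v k := by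
  simp [splice]

theorem splice_self (u : ℕ → α) (m : ℕ) (v : ℕ → α) : splice u m v m = v 0 :=
  splice_add u m v 0

theorem splice_of_le {m n : ℕ} (h₀ : v 0 = u m) (h : n ≤ m) : splice u m v n = u n := by
  rcases h.lt_or_eq with h | rfl
  · exact splice_of_lt h
  · rw [splice_self, h₀]

theorem hist_splice_add (u : ℕ → α) (m : ℕ) (v : ℕ → α) (k : ℕ) :
    hist (splice u m v) (m + k) = hist u m ++ hist v k := by
  simp only [hist_add, splice_add, hist_congr fun i (hi : i < m) => splice_of_lt (v := v) hi]

theorem comp_splice (φ : α → κ) (u : ℕ → α) (m : ℕ) (v : ℕ → α) :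
    φ ∘ splice u m v = splice (φ ∘ u) m (φ ∘ v) :=
  funext fun _ => apply_ite φ _ _ _

theorem splice_rel {R : α → α → Prop} {m : ℕ} (hu : ∀ n < m, R (u n) (u (n + 1)))
    (huv : R (u m) (v 0)) (hv : ∀ k, R (v k) (v (k + 1))) (n : ℕ) :
    R (splice u (m + 1) v n) (splice u (m + 1) v (n + 1)) := by
  rcases lt_trichotomy n m with h | rfl | h
  · rw [splice_of_lt (by omega), splice_of_lt (by omega)]
    exact hu n h
  · rwa [splice_of_lt (by omega), splice_self]
  · obtain ⟨k, rfl⟩ := Nat.exists_eq_add_of_lt h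
    rw [show m + k + 1 = m + 1 + k by omega, splice_add, add_assoc, splice_add]
    exact hv k

theorem cycle_rel {R : α → α → Prop} {m : ℕ} (hv : ∀ n < m, R (v n) (v (n + 1)))
    (hloop : R (v m) (v 0)) (k : ℕ) : R (v (k % (m + 1))) (v ((k + 1) % (m + 1))) := by
  rcases (Nat.lt_succ_iff.1 (Nat.mod_lt k m.succ_pos)).lt_or_eq with h | h
  · rw [← Nat.mod_add_mod, Nat.mod_eq_of_lt (Nat.succ_lt_succ h)]
    exact hv _ h
  · rw [Nat.succ_mod_succ_eq_zero_iff.2 h, h]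
    exact hloop

end Splice

section Occurrence

variable {α : Type} {ρ u v : ℕ → α}

theorem occ_eq_image_union (ρ : ℕ → α) (n : ℕ) :
    Occ ρ = ρ '' Iic n ∪ Occ fun k => ρ (n + k) := by
  refine subset_antisymm ?_ (union_subset (image_subset_range _ _) ?_)
  · rintro _ ⟨i, rfl⟩
    rcases le_total i n with h | h
    · exact .inl ⟨i, h, rfl⟩
    · exact .inr ⟨i - n, congrArg ρ (Nat.add_sub_cancel' h)⟩
  · rintro _ ⟨k, rfl⟩
    exact ⟨n + k, rfl⟩

theorem occ_splice_of_image_eq {m n : ℕ} (himage : u '' Iic m = v '' Iic n) (hmn : v n = u m) :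
    Occ (splice u m fun k => v (n + k)) = Occ v := by
  have hinitial : splice u m (fun k => v (n + k)) '' Iic m = u '' Iic m :=
    image_congr fun i hi => splice_of_le hmn hi
  simp only [occ_eq_image_union (splice u m fun k => v (n + k)) m, splice_add, hinitial, himage,
    ← occ_eq_image_union v n]

theorem infOcc_subset_occ (ρ : ℕ → α) : InfOcc ρ ⊆ Occ ρ := fun _ hx =>
  let ⟨n, _, hn⟩ := hx 0
  ⟨n, hn⟩

theorem mem_infOcc_iff_frequently {x : α} : x ∈ InfOcc ρ ↔ ∃ᶠ n in atTop, ρ n = x :=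
  frequently_atTop.symm

theorem infOcc_shift (ρ : ℕ → α) (m : ℕ) : InfOcc (fun k => ρ (m + k)) = InfOcc ρ := by
  ext x
  constructor <;> intro hx n
  · obtain ⟨k, hk, hkx⟩ := hx n
    exact ⟨m + k, by omega, hkx⟩
  · obtain ⟨i, hi, hix⟩ := hx (m + n)
    exact ⟨i - m, by omega, (congrArg ρ (by omega)).trans hix⟩

theorem infOcc_splice (u : ℕ → α) (m : ℕ) (v : ℕ → α) : InfOcc (splice u m v) = InfOcc v := by
  simp only [← infOcc_shift (splice u m v) m, splice_add]

theorem infOcc_cycle (v : ℕ → α) (m : ℕ) : InfOcc (fun k => v (k % (m + 1))) = v '' Iic m := by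
  refine subset_antisymm ?_ ?_
  · intro x hx
    obtain ⟨k, _, hk⟩ := hx 0
    exact ⟨k % (m + 1), Nat.lt_succ_iff.1 (Nat.mod_lt k m.succ_pos), hk⟩
  · rintro _ ⟨i, hi, rfl⟩ n
    refine ⟨i + (m + 1) * n, by nlinarith, congrArg v ?_⟩
    rw [Nat.add_mul_mod_self_left, Nat.mod_eq_of_lt (Nat.lt_succ_of_le hi)]

theorem eventually_mem_infOcc [Finite α] (ρ : ℕ → α) : ∀ᶠ n in atTop, ρ n ∈ InfOcc ρ := by
  have h : ∀ᶠ n in atTop, ∀ x, x ∉ InfOcc ρ → ρ n ≠ x := by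
    simpa only [eventually_all, eventually_imp_distrib_left, mem_infOcc_iff_frequently,
      not_frequently] using fun x hx => hx
  exact h.mono fun n hn => by_contra fun hx => hn _ hx rfl

theorem eventually_occ_eq_image [Finite α] (ρ : ℕ → α) :
    ∀ᶠ n in atTop, Occ ρ = ρ '' Iic n := by
  have h : ∀ᶠ n in atTop, ∀ x, x ∈ Occ ρ → x ∈ ρ '' Iic n := by
    rw [eventually_all]
    intro x
    rw [eventually_imp_distrib_left]
    rintro ⟨i, rfl⟩
    filter_upwards [eventually_ge_atTop i] with n hn using ⟨i, hn, rfl⟩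
  exact h.mono fun n hn => subset_antisymm hn (image_subset_range _ _)

theorem exists_occ_infOcc_eq_image [Finite α] (ρ : ℕ → α) :
    ∃ J J', Occ ρ = ρ '' Iic J ∧ InfOcc ρ = (fun k => ρ (J + 1 + k)) '' Iic J' ∧
      ρ (J + 1 + (J' + 1)) = ρ (J + 1) := by
  obtain ⟨J, hOcc, hInf⟩ :=
    ((eventually_occ_eq_image ρ).and
      (eventually_forall_ge_atTop.2 (eventually_mem_infOcc ρ))).exists
  set v : ℕ → α := fun k => ρ (J + 1 + k) with hv
  have hInf_v : InfOcc v = Occ v :=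
    (infOcc_subset_occ v).antisymm <| by
      rintro _ ⟨k, rfl⟩
      rw [hv, infOcc_shift]
      exact hInf _ (by omega)
  have hreturn : ∃ᶠ n in atTop, v (n + 1) = v 0 := by
    have h : ∃ᶠ n in atTop, v n = v 0 := mem_infOcc_iff_frequently.1 (hInf_v ▸ ⟨0, rfl⟩)
    rwa [← map_add_atTop_eq_nat 1, frequently_map] at h
  obtain ⟨J', hJ', hOcc_v⟩ := (hreturn.and_eventually (eventually_occ_eq_image v)).exists
  exact ⟨J, J', hOcc, by rw [← hOcc_v, ← hInf_v, hv, infOcc_shift], hJ'⟩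

end Occurrence

section Rerouting

variable {α κ : Type*} {ρ : ℕ → α} {K : ℕ → κ} {f : ℕ → ℕ} {L : ℕ}

/-- The index sequence `f` reroutes the sequence `K` up to time `L`: from position `f n` it advances
to `f n + 1` and then jumps to a position `f (n + 1)` carrying the same value of `K`. Hence
`K (f 0), …, K (f L)` is a walk along the transitions `K i → K (i + 1)` that starts at `K 0`. -/
structure IsRerouting (K : ℕ → κ) (f : ℕ → ℕ) (L : ℕ) : Prop where
  zero : K (f 0) = K 0
  succ : ∀ n < L, K (f (n + 1)) = K (f n + 1)

theorem IsRerouting.mono {L' : ℕ} (h : IsRerouting K f L) (hL : L' ≤ L) : IsRerouting K f L' :=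
  ⟨h.zero, fun n hn => h.succ n (hn.trans_le hL)⟩

theorem IsRerouting.comp {κ' : Type*} (h : IsRerouting K f L) (φ : κ → κ') :
    IsRerouting (φ ∘ K) f L :=
  ⟨congrArg φ h.zero, fun n hn => congrArg φ (h.succ n hn)⟩

theorem IsRerouting.exists_eraseLoop {a b : ℕ} (h : IsRerouting K f L) (hab : a < b) (hb : b ≤ L)
    (heq : K (f a) = K (f b)) : ∃ L' < L, ∃ g, IsRerouting K g L' ∧ g L' = f L := by
  obtain ⟨c, rfl⟩ := Nat.exists_eq_add_of_le hb
  refine ⟨a + c, by omega, splice f a fun k => f (b + k), ⟨?_, fun n hn => ?_⟩, splice_add ..⟩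
  · rcases a.eq_zero_or_pos with rfl | ha
    · rw [splice_self, add_zero, ← heq, h.zero]
    · rw [splice_of_lt ha, h.zero]
  · rcases lt_trichotomy (n + 1) a with hna | rfl | hna
    · rw [splice_of_lt hna, splice_of_lt (by omega)]
      exact h.succ n (by omega)
    · rw [splice_self, splice_of_lt n.lt_succ_self, add_zero, ← heq]
      exact h.succ n (by omega)
    · obtain ⟨k, rfl⟩ := Nat.exists_eq_add_of_le (Nat.lt_succ_iff.1 hna)
      rw [add_assoc, splice_add, splice_add]
      exact h.succ (b + k) (by omega)

theorem exists_isRerouting_injOn (K : ℕ → κ) (J : ℕ) :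
    ∃ L f, IsRerouting K f L ∧ f L = J ∧ InjOn (K ∘ f) (Iic L) := by
  classical
  have hex : ∃ L f, IsRerouting K f L ∧ f L = J := ⟨J, id, ⟨rfl, fun _ _ => rfl⟩, rfl⟩
  obtain ⟨f, hf, hJ⟩ := Nat.find_spec hex
  have hne : ∀ a b, a < b → b ≤ Nat.find hex → K (f a) ≠ K (f b) := fun a b hab hb heq =>
    let ⟨L', hL', g, hg, hgL'⟩ := hf.exists_eraseLoop hab hb heq
    Nat.find_min hex hL' ⟨g, hg, hgL'.trans hJ⟩
  refine ⟨_, f, hf, hJ, fun a ha b hb heq => ?_⟩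
  by_contra hab
  rcases Nat.lt_or_gt_of_ne hab with h | h
  · exact hne a b h hb heq
  · exact hne b a h ha heq.symm

theorem exists_isRerouting_le_ncard (hK : (range K).Finite) (J : ℕ) :
    ∃ L f, IsRerouting K f L ∧ f L = J ∧ L + 1 ≤ (range K).ncard := by
  obtain ⟨L, f, hf, hJ, hinj⟩ := exists_isRerouting_injOn K J
  refine ⟨L, f, hf, hJ, ?_⟩
  calc L + 1 = (Iic L).ncard := by simp [← Nat.card_coe_set_eq]
    _ ≤ (range K).ncard := ncard_le_ncard_of_injOn _ (fun n _ => mem_range_self (f n)) hinj hK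

/-- The `n`-th state of a play together with the set of states visited so far. -/
def snapshot (ρ : ℕ → α) (n : ℕ) : α × Set α := (ρ n, ρ '' Iic n)

-- The visited sets form a chain, so each is determined by its cardinality, between `1` and `|α|`.
theorem ncard_range_snapshot_le [Finite α] (ρ : ℕ → α) :
    (range (snapshot ρ)).ncard ≤ Nat.card α ^ 2 := by
  have hmaps : ∀ p ∈ range (snapshot ρ),
      (p.1, p.2.ncard) ∈ (univ : Set α) ×ˢ Icc 1 (Nat.card α) := by
    rintro _ ⟨n, rfl⟩
    have hpos : 0 < (ρ '' Iic n).ncard := (ncard_pos).2 (nonempty_Iic.image ρ)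
    exact ⟨mem_univ _, hpos, ncard_le_card _⟩
  have hinj : InjOn (fun p : α × Set α => (p.1, p.2.ncard)) (range (snapshot ρ)) := by
    rintro _ ⟨m, rfl⟩ _ ⟨n, rfl⟩ heq
    obtain ⟨hstate, hcard⟩ := Prod.mk.inj heq
    refine Prod.ext hstate ?_
    rcases le_total m n with h | h
    · exact eq_of_subset_of_ncard_le (image_mono (Iic_subset_Iic.2 h)) hcard.ge
    · exact (eq_of_subset_of_ncard_le (image_mono (Iic_subset_Iic.2 h)) hcard.le).symm
  calc (range (snapshot ρ)).ncard
      ≤ ((univ : Set α) ×ˢ Icc 1 (Nat.card α)).ncard :=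
        ncard_le_ncard_of_injOn _ hmaps hinj (toFinite _)
    _ = Nat.card α ^ 2 := by simp [ncard_prod, sq, ncard_univ, ncard_eq_toFinset_card']

theorem exists_isRerouting_snapshot_le [Finite α] (ρ : ℕ → α) (J : ℕ) :
    ∃ L f, IsRerouting (snapshot ρ) f L ∧ f L = J ∧ L + 1 ≤ Nat.card α ^ 2 := by
  have hfin : (range (snapshot ρ)).Finite := toFinite _
  obtain ⟨L, f, hf, hJ, hL⟩ := exists_isRerouting_le_ncard hfin J
  exact ⟨L, f, hf, hJ, hL.trans (ncard_range_snapshot_le ρ)⟩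

theorem IsRerouting.image_Iic (h : IsRerouting (snapshot ρ) f L) :
    (ρ ∘ f) '' Iic L = ρ '' Iic (f L) := by
  have hIic_succ (n : ℕ) : Iic (n + 1) = insert (n + 1) (Iic n) := Order.Iic_succ n
  induction L with
  | zero =>
    have hvisited : ρ '' Iic (f 0) = ρ '' Iic 0 := congrArg Prod.snd h.zero
    have hstate : ρ (f 0) = ρ 0 := congrArg Prod.fst h.zero
    rw [hvisited, show Iic 0 = {0} from Iic_bot, image_singleton, image_singleton,
      Function.comp_apply, hstate]
  | succ L ih =>
    have hvisited : ρ '' Iic (f (L + 1)) = ρ '' Iic (f L + 1) :=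
      congrArg Prod.snd (h.succ L L.lt_succ_self)
    have hstate : ρ (f (L + 1)) = ρ (f L + 1) := congrArg Prod.fst (h.succ L L.lt_succ_self)
    rw [hvisited, hIic_succ, hIic_succ, image_insert_eq, image_insert_eq, ih (h.mono L.le_succ),
      Function.comp_apply, hstate]

end Rerouting

section Lasso

variable {α : Type} {ρ : ℕ → α}

theorem isRerouting_snapshot_lasso {L M J J' : ℕ} {f g : ℕ → ℕ} (hOcc : Occ ρ = ρ '' Iic J)
    (hloop : ρ (J + 1 + (J' + 1)) = ρ (J + 1)) (hf : IsRerouting (snapshot ρ) f L) (hfL : f L = J)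
    (hg : IsRerouting (fun k => ρ (J + 1 + k)) g M) (hgM : g M = J') (n : ℕ) :
    IsRerouting (snapshot ρ) (splice f (L + 1) fun k => J + 1 + g (k % (M + 1))) n := by
  have hvisited (i : ℕ) (hi : J ≤ i) : ρ '' Iic i = Occ ρ :=
    (image_subset_range _ _).antisymm (hOcc.trans_subset (image_mono (Iic_subset_Iic.2 hi)))
  have hsnap {i j : ℕ} (hi : J ≤ i) (hj : J ≤ j) (h : ρ i = ρ j) : snapshot ρ i = snapshot ρ j :=
    Prod.ext h ((hvisited i hi).trans (hvisited j hj).symm)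
  refine ⟨by rw [splice_of_lt L.succ_pos, hf.zero], fun n _ => Eq.symm ?_⟩
  refine splice_rel (R := fun i j => snapshot ρ (i + 1) = snapshot ρ j)
    (fun n hn => (hf.succ n hn).symm) ?_ ?_ n
  · rw [hfL]
    exact hsnap (by omega) (by omega) (by simpa using hg.zero.symm)
  · refine cycle_rel (R := fun i j => snapshot ρ (i + 1) = snapshot ρ j)
      (v := fun k => J + 1 + g k) (fun n hn => ?_) ?_
    · exact hsnap (by omega) (by omega) (hg.succ n hn).symm
    · exact hsnap (by omega) (by omega) (by rw [hgM, add_assoc, hloop]; exact hg.zero.symm)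

theorem exists_lasso_isRerouting [Finite α] (ρ : ℕ → α) :
    ∃ (L M : ℕ) (f g F : ℕ → ℕ), L + 1 ≤ Nat.card α ^ 2 ∧ M + 1 ≤ Nat.card α ^ 2 ∧
      F = splice f (L + 1) (fun k => g (k % (M + 1))) ∧
      (∀ n, IsRerouting (snapshot ρ) F n) ∧ Occ (ρ ∘ F) = Occ ρ ∧ InfOcc (ρ ∘ F) = InfOcc ρ := by
  obtain ⟨J, J', hOcc, hInf, hloop⟩ := exists_occ_infOcc_eq_image ρ
  obtain ⟨L, f, hf, hfL, hL⟩ := exists_isRerouting_snapshot_le ρ J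
  obtain ⟨M, g, hg, hgM, hM⟩ := exists_isRerouting_snapshot_le (fun k => ρ (J + 1 + k)) J'
  set F : ℕ → ℕ := splice f (L + 1) fun k => J + 1 + g (k % (M + 1)) with hFdef
  have hF : ∀ n, IsRerouting (snapshot ρ) F n :=
    isRerouting_snapshot_lasso hOcc hloop hf hfL (hg.comp Prod.fst) hgM
  have hFL : F L = J := (splice_of_lt L.lt_succ_self).trans hfL
  refine ⟨L, M, f, fun k => J + 1 + g k, F, hL, hM, rfl, hF, ?_, ?_⟩
  · refine (range_comp_subset_range F ρ).antisymm ?_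
    calc Occ ρ = (ρ ∘ F) '' Iic L := by rw [hOcc, (hF L).image_Iic, hFL]
      _ ⊆ Occ (ρ ∘ F) := image_subset_range _ _
  · rw [hFdef, comp_splice, infOcc_splice, hInf, ← hgM, ← hg.image_Iic]
    exact infOcc_cycle (fun k => ρ (J + 1 + g k)) M

end Lasso

end Play

section Translation

variable {α : Type*} {ρ o : ℕ → α}

open Classical in
/-- The length of the longest common prefix of the play `ρ` and the list `l`. -/
noncomputable def agreement (ρ : ℕ → α) (l : List α) : ℕ :=
  Nat.findGreatest (fun k => hist ρ k <+: l) l.length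

theorem agreement_hist {n m : ℕ} (hnm : n ≤ m) (hagree : ∀ i < n, o i = ρ i)
    (hdiff : n < m → o n ≠ ρ n) : agreement ρ (hist o m) = n := by
  classical
  rw [agreement, length_hist, Nat.findGreatest_eq_iff]
  refine ⟨hnm, fun _ => (hist_isPrefix_hist_iff hnm).2 fun i hi => (hagree i hi).symm, ?_⟩
  intro k hnk hkm hk
  exact hdiff (hnk.trans_le hkm) ((hist_isPrefix_hist_iff hkm).1 hk n hnk).symm

/-- Translates the history `h` with current state `x`, met along the rerouted play `ρ ∘ F`, into a
history for `ρ`: the last position `k` at which `h` still follows `ρ ∘ F` corresponds to position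
`F k` of `ρ`, and what comes after it is kept. When not even the first state agrees, the truncated
subtraction makes `k = 0`. -/
noncomputable def translateHistory (ρ : ℕ → α) (F : ℕ → ℕ) (h : List α) (x : α) : List α :=
  let k := agreement (ρ ∘ F) (h ++ [x]) - 1
  hist ρ (F k) ++ h.drop k

theorem translateHistory_hist {F : ℕ → ℕ} {n k : ℕ} (hagree : ∀ i ≤ n, o i = ρ (F i))
    (hdiff : 0 < k → o (n + 1) ≠ ρ (F (n + 1))) :
    translateHistory ρ F (hist o (n + k)) (o (n + k)) =
      hist ρ (F n) ++ hist (fun j => o (n + j)) k := by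
  have hk : agreement (ρ ∘ F) (hist o (n + k + 1)) = n + 1 :=
    agreement_hist (by omega) (fun i hi => hagree i (Nat.lt_succ_iff.1 hi))
      fun h => hdiff (by omega)
  rw [translateHistory, ← hist_succ, hk, Nat.add_sub_cancel, hist_add o,
    List.drop_left' (length_hist o n)]

end Translation

namespace ConcGame

variable {Stat Agt Act : Type} {G : ConcGame Stat Agt Act} {σ : Agt → List Stat → Stat → Act}
  {s : Stat} {A : Agt} {ρ o : ℕ → Stat}

theorem run_eq_of_step (h₀ : o 0 = s)
    (hstep : ∀ n, o (n + 1) = G.Tab (o n) fun B => σ B (hist o n) (o n)) (n : ℕ) :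
    G.run σ s n = (o n, hist o n) := by
  induction n with
  | zero => rw [h₀]; rfl
  | succ n ih => rw [run, ih, hstep, hist_succ]

theorem run_snd (G : ConcGame Stat Agt Act) (σ : Agt → List Stat → Stat → Act) (s : Stat) (n : ℕ) :
    (G.run σ s n).2 = hist (G.outcome σ s) n := by
  induction n with
  | zero => rfl
  | succ n ih => rw [hist_succ, ← ih]; rfl

theorem outcome_eq_iff : G.outcome σ s = o ↔
    o 0 = s ∧ ∀ n, o (n + 1) = G.Tab (o n) fun B => σ B (hist o n) (o n) := by
  constructor
  · rintro rfl
    exact ⟨rfl, fun n => by rw [← run_snd]; rfl⟩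
  · rintro ⟨h₀, hstep⟩
    exact funext fun n => congrArg Prod.fst (run_eq_of_step h₀ hstep n)

/-- The profile that plays along the rerouted play `ρ ∘ F` as `σ` does along `ρ`, by translating
histories. -/
noncomputable def reroute (σ : Agt → List Stat → Stat → Act) (ρ : ℕ → Stat) (F : ℕ → ℕ) :
    Agt → List Stat → Stat → Act :=
  fun B h x => σ B (translateHistory ρ F h x) x

theorem IsProfile.reroute (hσ : G.IsProfile σ) (ρ : ℕ → Stat) (F : ℕ → ℕ) :
    G.IsProfile (reroute σ ρ F) :=
  fun B _ x => hσ B _ x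

theorem outcome_reroute {F : ℕ → ℕ} (hρ : G.outcome σ s = ρ) (hF : ∀ n, IsRerouting ρ F n) :
    G.outcome (reroute σ ρ F) s = ρ ∘ F := by
  obtain ⟨h₀, hstep⟩ := outcome_eq_iff.1 hρ
  refine outcome_eq_iff.2 ⟨(hF 0).zero.trans h₀, fun n => ?_⟩
  have htranslate : translateHistory ρ F (hist (ρ ∘ F) n) (ρ (F n)) = hist ρ (F n) := by
    simpa [hist] using translateHistory_hist (o := ρ ∘ F) (F := F) (n := n) (k := 0)
      (fun _ _ => rfl) (fun h => absurd h (lt_irrefl 0))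
  simp only [Function.comp_apply, (hF (n + 1)).succ n n.lt_succ_self, hstep, reroute,
    htranslate]

variable [DecidableEq Agt]

/-- The play `o` from `s` is a unilateral deviation of player `A` from the profile `σ`: at every
step, all players except possibly `A` follow `σ`. -/
structure IsDeviation (G : ConcGame Stat Agt Act) (σ : Agt → List Stat → Stat → Act) (s : Stat)
    (A : Agt) (o : ℕ → Stat) : Prop where
  zero : o 0 = s
  succ : ∀ n, ∃ a ∈ G.Allow (o n) A,
    o (n + 1) = G.Tab (o n) (Function.update (fun B => σ B (hist o n) (o n)) A a)

theorem update_strategy_apply (σ : Agt → List Stat → Stat → Act) (A : Agt)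
    (τ : List Stat → Stat → Act) (h : List Stat) (x : Stat) :
    (fun B => Function.update σ A τ B h x) = Function.update (fun B => σ B h x) A (τ h x) :=
  funext <| Function.apply_update (fun _ strategy => strategy h x) σ A τ

theorem isDeviation_iff_exists_strategy :
    G.IsDeviation σ s A o ↔
      ∃ τ, G.IsStrategy A τ ∧ G.outcome (Function.update σ A τ) s = o := by
  simp only [outcome_eq_iff, update_strategy_apply]
  constructor
  · rintro ⟨h₀, hstep⟩
    choose a ha hstep using hstep
    choose b hb using fun x => G.Allow_nonempty x A
    classical
    refine ⟨fun h x => if x = o h.length then a h.length else b x, fun h x => ?_, h₀, fun n => ?_⟩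
    · dsimp only
      split_ifs with hx
      · exact hx ▸ ha _
      · exact hb x
    · simpa only [length_hist, if_true] using hstep n
  · rintro ⟨τ, hτ, h₀, hstep⟩
    exact ⟨h₀, fun n => ⟨_, hτ _ _, hstep n⟩⟩

theorem isNash_iff_forall_isDeviation :
    G.IsNash s σ ↔
      G.IsProfile σ ∧ ∀ A o, G.IsDeviation σ s A o → G.pref A o (G.outcome σ s) := by
  simp only [IsNash, isDeviation_iff_exists_strategy, forall_exists_index, and_imp]
  refine and_congr_right fun _ => forall_congr' fun A => ?_
  exact ⟨fun h o τ hτ ho => ho ▸ h τ hτ, fun h τ hτ => h _ τ hτ rfl⟩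

theorem IsProfile.isDeviation_outcome (hσ : G.IsProfile σ) (A : Agt) :
    G.IsDeviation σ s A (G.outcome σ s) :=
  isDeviation_iff_exists_strategy.2 ⟨σ A, hσ A, by rw [Function.update_eq_self]⟩

theorem isDeviation_splice {m : ℕ} (hρ : G.IsDeviation σ s A ρ) (h₀ : o 0 = ρ m)
    (hstep : ∀ k, ∃ a ∈ G.Allow (o k) A, o (k + 1) =
      G.Tab (o k) (Function.update (fun B => σ B (hist ρ m ++ hist o k) (o k)) A a)) :
    G.IsDeviation σ s A (splice ρ m o) := by
  refine ⟨by rw [splice_of_le h₀ m.zero_le, hρ.zero], fun n => ?_⟩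
  rcases lt_or_ge n m with h | h
  · have hhist : hist (splice ρ m o) n = hist ρ n :=
      hist_congr fun i hi => splice_of_lt (hi.trans h)
    rw [splice_of_le h₀ h.le, splice_of_le h₀ h, hhist]
    exact hρ.succ n
  · obtain ⟨k, rfl⟩ := Nat.exists_eq_add_of_le h
    rw [add_assoc, splice_add, splice_add, hist_splice_add]
    exact hstep k

theorem isDeviation_splice_of_reroute {F : ℕ → ℕ} {n : ℕ} (hρ : G.IsDeviation σ s A ρ)
    (ho : G.IsDeviation (reroute σ ρ F) s A o) (hagree : ∀ i ≤ n, o i = ρ (F i))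
    (hdiff : o (n + 1) ≠ ρ (F (n + 1))) :
    G.IsDeviation σ s A (splice ρ (F n) fun k => o (n + k)) := by
  refine isDeviation_splice hρ (hagree n le_rfl) fun k => ?_
  simpa only [reroute, translateHistory_hist hagree fun _ => hdiff, add_assoc] using ho.succ (n + k)

theorem IsNash.reroute {F : ℕ → ℕ}
    (htrans : ∀ A ρ₁ ρ₂ ρ₃, G.pref A ρ₁ ρ₂ → G.pref A ρ₂ ρ₃ → G.pref A ρ₁ ρ₃)
    (hG : ∀ A (ρ ρ' : ℕ → Stat), Occ ρ = Occ ρ' → InfOcc ρ = InfOcc ρ' → G.pref A ρ ρ')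
    (hNE : G.IsNash s σ) (hρ : G.outcome σ s = ρ) (hF : ∀ n, IsRerouting (snapshot ρ) F n)
    (hOcc : Occ (ρ ∘ F) = Occ ρ) (hInf : InfOcc (ρ ∘ F) = InfOcc ρ) :
    G.IsNash s (reroute σ ρ F) := by
  have hout := outcome_reroute hρ fun n => (hF n).comp Prod.fst
  obtain ⟨hσ, hbest⟩ := isNash_iff_forall_isDeviation.1 hNE
  refine isNash_iff_forall_isDeviation.2 ⟨hσ.reroute ρ F, fun A o ho => ?_⟩
  rw [hout]
  by_cases hne : o = ρ ∘ F
  · exact hG A _ _ (congrArg Occ hne) (congrArg InfOcc hne)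
  have hρdev : G.IsDeviation σ s A ρ := hρ ▸ hσ.isDeviation_outcome A
  obtain ⟨n, hagree, hdiff⟩ :=
    exists_last_agreement (ho.zero.trans (congrFun hout 0)) hne
  set q := splice ρ (F n) fun k => o (n + k) with hq
  have himage : ρ '' Set.Iic (F n) = o '' Set.Iic n := by
    rw [← (hF n).image_Iic]
    exact Set.image_congr fun i hi => (hagree i hi).symm
  have hoq : G.pref A o q := hG A o q (occ_splice_of_image_eq himage (hagree n le_rfl)).symm
    (by rw [hq, infOcc_splice, infOcc_shift])
  have hqρ : G.pref A q ρ := hρ ▸ hbest A q (isDeviation_splice_of_reroute hρdev ho hagree hdiff)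
  exact htrans A o q _ hoq (htrans A q ρ _ hqρ (hG A _ _ hOcc.symm hInf.symm))

end ConcGame

theorem stmt0_general {Stat Agt Act : Type} [Fintype Stat] [DecidableEq Agt]
    (G : ConcGame Stat Agt Act)
    (htrans : ∀ A ρ₁ ρ₂ ρ₃, G.pref A ρ₁ ρ₂ → G.pref A ρ₂ ρ₃ → G.pref A ρ₁ ρ₃)
    (hG : ∀ A (ρ ρ' : ℕ → Stat), Occ ρ = Occ ρ' → InfOcc ρ = InfOcc ρ' →
      G.pref A ρ ρ' ∧ G.pref A ρ' ρ)
    (s : Stat) (ρ : ℕ → Stat) (σ : Agt → List Stat → Stat → Act)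
    (hNE : G.IsNash s σ) (hout : ∀ n, G.outcome σ s n = ρ n) :
    ∃ (σ' : Agt → List Stat → Stat → Act) (π τ : List Stat),
      G.IsNash s σ' ∧
      π.length ≤ Fintype.card Stat ^ 2 ∧
      τ.length ≤ Fintype.card Stat ^ 2 ∧ τ ≠ [] ∧
      (∀ n, G.outcome σ' s n =
        if n < π.length then π.getD n s else τ.getD ((n - π.length) % τ.length) s) ∧
      ∀ A, G.pref A ρ (G.outcome σ' s) ∧ G.pref A (G.outcome σ' s) ρ := by
  obtain ⟨L, M, f, g, F, hL, hM, rfl, hF, hOcc, hInf⟩ := exists_lasso_isRerouting ρ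
  rw [Nat.card_eq_fintype_card] at hL hM
  have hρ : G.outcome σ s = ρ := funext hout
  have hout' := ConcGame.outcome_reroute hρ fun n => (hF n).comp Prod.fst
  refine ⟨_, hist (ρ ∘ f) (L + 1), hist (ρ ∘ g) (M + 1),
    hNE.reroute htrans (fun A ρ ρ' hO hI => (hG A ρ ρ' hO hI).1) hρ hF hOcc hInf,
    by rwa [length_hist], by rwa [length_hist], by simp [hist], fun n => ?_, fun A => ?_⟩
  · rw [hout', comp_splice, length_hist, length_hist, getD_hist _ (Nat.mod_lt _ M.succ_pos)]
    split_ifs with hn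
    · rw [splice_of_lt hn, getD_hist _ hn]
    · exact if_neg hn
  · rw [hout']
    exact hG A _ _ hOcc.symm hInf.symm

/-- In a finite concurrent game whose preference relations only
depend on the sets of visited and infinitely-visited states, any Nash equilibrium
outcome can be replaced by a lasso-shaped Nash equilibrium outcome
`π · τ^ω` with `|π|, |τ| ≤ |Stat|²`, equivalent for every player. -/
theorem stmt0 {Stat Agt Act : Type} [Fintype Stat] [Fintype Agt] [Fintype Act]
    [DecidableEq Agt]
    (G : ConcGame Stat Agt Act)
    (hrefl : ∀ A ρ, G.pref A ρ ρ)
    (htrans : ∀ A ρ₁ ρ₂ ρ₃, G.pref A ρ₁ ρ₂ → G.pref A ρ₂ ρ₃ → G.pref A ρ₁ ρ₃)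
    (hG : ∀ A (ρ ρ' : ℕ → Stat), Occ ρ = Occ ρ' → InfOcc ρ = InfOcc ρ' →
      G.pref A ρ ρ' ∧ G.pref A ρ' ρ)
    (s : Stat) (ρ : ℕ → Stat) (σ : Agt → List Stat → Stat → Act)
    (hNE : G.IsNash s σ) (hout : ∀ n, G.outcome σ s n = ρ n) :
    ∃ (σ' : Agt → List Stat → Stat → Act) (π τ : List Stat),
      G.IsNash s σ' ∧
      π.length ≤ Fintype.card Stat ^ 2 ∧
      τ.length ≤ Fintype.card Stat ^ 2 ∧ τ ≠ [] ∧
      (∀ n, G.outcome σ' s n =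
        if n < π.length then π.getD n s else τ.getD ((n - π.length) % τ.length) s) ∧
      ∀ A, G.pref A ρ (G.outcome σ' s) ∧ G.pref A (G.outcome σ' s) ρ :=
  stmt0_general G htrans hG s ρ σ hNE hout
end

section
/- Let G be a two-player concurrent game with players A and B such that (i) the preference relation ≼_A is total, Noetherian and almost-well-founded, and (ii) G is determined from every state s: for every play π, (∃σ_A ∀σ_B, π ≼_A Out(s,(σ_A,σ_B))) iff (∀σ_B ∃σ_A, π ≼_A Out(s,(σ_A,σ_B))). Let G' be the game obtained from G by replacing B's preference relation by the trivial one in which all plays are equivalent. Then for every state s and every play π from s, the following are equivalent: (1) there is a Nash equilibrium in G' from s whose outcome ρ satisfies ¬(π ≼_A ρ); (2) player A cannot ensure π from s in G, i.e. there is no strategy σ_A such that π ≼_A Out(s,(σ_A,σ_B)) for every strategy σ_B of B. -/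
/-- The game obtained from `G` by replacing player `pB`'s preference relation
by the trivial one in which all plays are equivalent. -/
def trivialB {Stat Agt Act : Type} [DecidableEq Agt] (G : ConcGame Stat Agt Act)
    (pB : Agt) : ConcGame Stat Agt Act :=
  { G with pref := fun C => if C = pB then fun _ _ => True else G.pref C }

/-! If `A` can ensure `π`, then switching to an ensuring strategy shows that every equilibrium gives
`A` at least `π`. Conversely, when `A` cannot ensure `π`, determinacy yields a strategy of the
opponents against which `A` never does as well as `π`; since `≼_A` is total and Noetherian, `A` has
a best response to it, and the resulting profile is an equilibrium because the opponents are
indifferent. -/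

theorem exists_greatest_of_total {α : Type*} {r : α → α → Prop} (htotal : ∀ a b, r a b ∨ r b a)
    {S : Set α} (hmax : ∃ a ∈ S, ∀ b ∈ S, ¬ (r a b ∧ ¬ r b a)) : ∃ a ∈ S, ∀ b ∈ S, r b a := by
  obtain ⟨a, ha, hmax⟩ := hmax
  exact ⟨a, ha, fun b hb => (htotal b a).elim id fun hab => not_not.1 (not_and.1 (hmax b hb) hab)⟩

namespace ConcGame

variable {Stat Agt Act : Type}

theorem exists_isStrategy (G : ConcGame Stat Agt Act) (A : Agt) : ∃ τ, G.IsStrategy A τ :=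
  ⟨fun _ t => (G.Allow_nonempty t A).some, fun _ t => (G.Allow_nonempty t A).some_mem⟩

theorem outcome_eq_of_tab_eq {G G' : ConcGame Stat Agt Act} (hTab : G.Tab = G'.Tab)
    (σ : Agt → List Stat → Stat → Act) (s : Stat) : G.outcome σ s = G'.outcome σ s := by
  have hrun (n : ℕ) : G.run σ s n = G'.run σ s n := by
    induction n with
    | zero => rfl
    | succ n ih => simp only [run, ih, hTab]
  exact funext fun n => congrArg Prod.fst (hrun n)

variable {G : ConcGame Stat Agt Act} {A B : Agt} {s : Stat} {π : ℕ → Stat}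
  {σ : Agt → List Stat → Stat → Act} {τ : List Stat → Stat → Act}

theorem IsProfile.update [DecidableEq Agt] (hσ : G.IsProfile σ) (hτ : G.IsStrategy A τ) :
    G.IsProfile (Function.update σ A τ) := by
  intro C
  obtain rfl | hC := eq_or_ne C A
  · simpa only [Function.update_self] using hτ
  · simpa only [Function.update_of_ne hC] using hσ C

theorem forall_isProfile_apply_iff (P : (List Stat → Stat → Act) → Prop) :
    (∀ σ, G.IsProfile σ → P (σ B)) ↔ ∀ τ, G.IsStrategy B τ → P τ := by
  refine ⟨fun h τ hτ => ?_, fun h σ hσ => h (σ B) (hσ B)⟩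
  classical
  choose σ hσ using G.exists_isStrategy
  simpa only [Function.update_self] using h (Function.update σ B τ) (IsProfile.update hσ hτ)

variable [DecidableEq Agt]

/-- In the profile `σ`, player `A` plays a best response from `s` to the other players: no
deviation by `A` alone improves on the outcome of `σ`. A profile is a Nash equilibrium when this
holds for every player. -/
def IsBestResponse (G : ConcGame Stat Agt Act) (A : Agt) (s : Stat)
    (σ : Agt → List Stat → Stat → Act) : Prop :=
  ∀ τ, G.IsStrategy A τ → G.pref A (G.outcome (Function.update σ A τ) s) (G.outcome σ s)

/-- Player `A` can ensure `π` from `s`: a single strategy of `A` secures an outcome at least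
as good as `π` against the coalition of all other players. The coalition's strategies are encoded as
full profiles whose `A`-component is overwritten. -/
def CanEnsure (G : ConcGame Stat Agt Act) (A : Agt) (s : Stat) (π : ℕ → Stat) : Prop :=
  ∃ τ, G.IsStrategy A τ ∧
    ∀ σ, G.IsProfile σ → G.pref A π (G.outcome (Function.update σ A τ) s)

/-- The coalition of the other players cannot prevent `π`: to each of its joint strategies `A` has a
reply whose outcome is at least as good as `π`. Determinacy says that this implies `CanEnsure`. -/
def CanAlwaysReply (G : ConcGame Stat Agt Act) (A : Agt) (s : Stat) (π : ℕ → Stat) : Prop :=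
  ∀ σ, G.IsProfile σ →
    ∃ τ, G.IsStrategy A τ ∧ G.pref A π (G.outcome (Function.update σ A τ) s)

/-- The game in which every player other than `A` becomes indifferent between all plays; it agrees
with `trivialB` when there is only one other player. -/
def indifferentExcept (G : ConcGame Stat Agt Act) (A : Agt) : ConcGame Stat Agt Act :=
  { G with pref := fun C => if C = A then G.pref A else fun _ _ => True }

theorem outcome_indifferentExcept (σ : Agt → List Stat → Stat → Act) (s : Stat) :
    (G.indifferentExcept A).outcome σ s = G.outcome σ s :=
  outcome_eq_of_tab_eq (show (G.indifferentExcept A).Tab = G.Tab from rfl) σ s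

theorem pref_indifferentExcept_self : (G.indifferentExcept A).pref A = G.pref A :=
  if_pos rfl

theorem pref_indifferentExcept_of_ne (hBA : B ≠ A) :
    (G.indifferentExcept A).pref B = fun _ _ => True :=
  if_neg hBA

theorem isNash_indifferentExcept_iff :
    (G.indifferentExcept A).IsNash s σ ↔ G.IsProfile σ ∧ G.IsBestResponse A s σ := by
  refine and_congr_right fun _ => ⟨fun hnash τ hτ => ?_, fun hbest C τ hτ => ?_⟩
  · simpa only [outcome_indifferentExcept, pref_indifferentExcept_self] using hnash A τ hτ
  · obtain rfl | hC := eq_or_ne C A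
    · simpa only [outcome_indifferentExcept, pref_indifferentExcept_self] using hbest τ hτ
    · simp only [pref_indifferentExcept_of_ne hC]

theorem IsBestResponse.pref_outcome_of_canEnsure
    (htrans : ∀ ρ₁ ρ₂ ρ₃, G.pref A ρ₁ ρ₂ → G.pref A ρ₂ ρ₃ → G.pref A ρ₁ ρ₃)
    (hbest : G.IsBestResponse A s σ) (hσ : G.IsProfile σ) (hensure : G.CanEnsure A s π) :
    G.pref A π (G.outcome σ s) := by
  obtain ⟨τ, hτ, hensure⟩ := hensure
  exact htrans _ _ _ (hensure σ hσ) (hbest τ hτ)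

theorem exists_isBestResponse_update
    (htotal : ∀ ρ ρ', G.pref A ρ ρ' ∨ G.pref A ρ' ρ)
    (hnoeth : ∀ S : Set (ℕ → Stat), S.Nonempty →
      ∃ ρ ∈ S, ∀ ρ' ∈ S, ¬ (G.pref A ρ ρ' ∧ ¬ G.pref A ρ' ρ))
    (σ : Agt → List Stat → Stat → Act) (s : Stat) :
    ∃ τ, G.IsStrategy A τ ∧ G.IsBestResponse A s (Function.update σ A τ) := by
  have hne : ((fun τ => G.outcome (Function.update σ A τ) s) '' {τ | G.IsStrategy A τ}).Nonempty :=
    Set.Nonempty.image _ (G.exists_isStrategy A)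
  obtain ⟨_, ⟨τ, hτ, rfl⟩, hgreatest⟩ := exists_greatest_of_total htotal (hnoeth _ hne)
  refine ⟨τ, hτ, fun τ' hτ' => ?_⟩
  rw [Function.update_idem]
  exact hgreatest _ (Set.mem_image_of_mem _ hτ')

theorem trivialB_eq_indifferentExcept (hAB : A ≠ B) (htwo : ∀ C, C = A ∨ C = B) :
    trivialB G B = G.indifferentExcept A := by
  have hpref : (trivialB G B).pref = (G.indifferentExcept A).pref := by
    funext C
    obtain rfl | rfl := htwo C
    · rw [pref_indifferentExcept_self]
      exact if_neg hAB
    · rw [pref_indifferentExcept_of_ne hAB.symm]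
      exact if_pos rfl
  exact congrArg (fun p => { G with pref := p }) hpref

theorem update_eq_ite_of_two_players (htwo : ∀ C, C = A ∨ C = B)
    (σ : Agt → List Stat → Stat → Act) (τ : List Stat → Stat → Act) :
    Function.update σ A τ = fun C => if C = A then τ else σ B := by
  funext C
  rw [Function.update_apply]
  exact ite_congr rfl (fun _ => rfl) fun hC => congrArg σ ((htwo C).resolve_left hC)

theorem canEnsure_iff_of_two_players (htwo : ∀ C, C = A ∨ C = B) :
    G.CanEnsure A s π ↔ ∃ σA, G.IsStrategy A σA ∧ ∀ σB, G.IsStrategy B σB →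
      G.pref A π (G.outcome (fun C => if C = A then σA else σB) s) := by
  simp only [CanEnsure, update_eq_ite_of_two_players htwo]
  exact exists_congr fun τ => and_congr_right fun _ => forall_isProfile_apply_iff fun σB =>
    G.pref A π (G.outcome (fun C => if C = A then τ else σB) s)

theorem canAlwaysReply_iff_of_two_players (htwo : ∀ C, C = A ∨ C = B) :
    G.CanAlwaysReply A s π ↔ ∀ σB, G.IsStrategy B σB → ∃ σA, G.IsStrategy A σA ∧
      G.pref A π (G.outcome (fun C => if C = A then σA else σB) s) := by
  simp only [CanAlwaysReply, update_eq_ite_of_two_players htwo]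
  exact forall_isProfile_apply_iff fun σB => ∃ σA, G.IsStrategy A σA ∧
    G.pref A π (G.outcome (fun C => if C = A then σA else σB) s)

end ConcGame

theorem stmt1_general {Stat Agt Act : Type} [DecidableEq Agt]
    (G : ConcGame Stat Agt Act) (A : Agt)
    (htrans : ∀ ρ₁ ρ₂ ρ₃, G.pref A ρ₁ ρ₂ → G.pref A ρ₂ ρ₃ → G.pref A ρ₁ ρ₃)
    (htotal : ∀ ρ ρ', G.pref A ρ ρ' ∨ G.pref A ρ' ρ)
    (hnoeth : ∀ S : Set (ℕ → Stat), S.Nonempty →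
      ∃ ρ ∈ S, ∀ ρ' ∈ S, ¬ (G.pref A ρ ρ' ∧ ¬ G.pref A ρ' ρ))
    (s : Stat) (π : ℕ → Stat) (hdet : G.CanAlwaysReply A s π → G.CanEnsure A s π) :
    (∃ σ, (G.indifferentExcept A).IsNash s σ ∧ ¬ G.pref A π (G.outcome σ s)) ↔
      ¬ G.CanEnsure A s π := by
  constructor
  · rintro ⟨σ, hnash, hbelow⟩ hensure
    obtain ⟨hσ, hbest⟩ := ConcGame.isNash_indifferentExcept_iff.1 hnash
    exact hbelow (hbest.pref_outcome_of_canEnsure htrans hσ hensure)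
  · intro hcannot
    obtain ⟨σ, hσ, hblock⟩ : ∃ σ, G.IsProfile σ ∧ ∀ τ, G.IsStrategy A τ →
        ¬ G.pref A π (G.outcome (Function.update σ A τ) s) := by
      simpa only [ConcGame.CanAlwaysReply, not_forall, not_exists, not_and, exists_prop]
        using mt hdet hcannot
    obtain ⟨τ, hτ, hbest⟩ := ConcGame.exists_isBestResponse_update htotal hnoeth σ s
    exact ⟨Function.update σ A τ,
      ConcGame.isNash_indifferentExcept_iff.2 ⟨hσ.update hτ, hbest⟩, hblock τ hτ⟩

/-- For a determined two-player game whose first player has a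
total, Noetherian, almost-well-founded preference, there is a Nash equilibrium
of the trivialised game whose outcome is strictly worse than `π` for `A`
iff `A` cannot ensure `π`. -/
theorem stmt1 {Stat Agt Act : Type} [DecidableEq Agt]
    (G : ConcGame Stat Agt Act) (pA pB : Agt) (hAB : pA ≠ pB)
    (htwo : ∀ C, C = pA ∨ C = pB)
    (hrefl : ∀ C ρ, G.pref C ρ ρ)
    (htrans : ∀ C ρ₁ ρ₂ ρ₃, G.pref C ρ₁ ρ₂ → G.pref C ρ₂ ρ₃ → G.pref C ρ₁ ρ₃)
    (htotal : ∀ ρ ρ', G.pref pA ρ ρ' ∨ G.pref pA ρ' ρ)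
    (hnoeth : ∀ S : Set (ℕ → Stat), S.Nonempty →
      ∃ ρ ∈ S, ∀ ρ' ∈ S, ¬ (G.pref pA ρ ρ' ∧ ¬ G.pref pA ρ' ρ))
    (hawf : ∀ S : Set (ℕ → Stat), S.Nonempty → (∃ b, ∀ ρ ∈ S, G.pref pA b ρ) →
      ∃ ρ ∈ S, ∀ ρ' ∈ S, ¬ (G.pref pA ρ' ρ ∧ ¬ G.pref pA ρ ρ'))
    (hdet : ∀ (t : Stat) (χ : ℕ → Stat),
      (∃ σA, G.IsStrategy pA σA ∧ ∀ σB, G.IsStrategy pB σB →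
          G.pref pA χ (G.outcome (fun C => if C = pA then σA else σB) t)) ↔
        (∀ σB, G.IsStrategy pB σB → ∃ σA, G.IsStrategy pA σA ∧
          G.pref pA χ (G.outcome (fun C => if C = pA then σA else σB) t)))
    (s : Stat) (π : ℕ → Stat) (hπ : π 0 = s) :
    (∃ σ, (trivialB G pB).IsNash s σ ∧ ¬ G.pref pA π (G.outcome σ s)) ↔
      ¬ ∃ σA, G.IsStrategy pA σA ∧ ∀ σB, G.IsStrategy pB σB →
          G.pref pA π (G.outcome (fun C => if C = pA then σA else σB) s) := by
  simp only [ConcGame.trivialB_eq_indifferentExcept hAB htwo,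
    ← ConcGame.canEnsure_iff_of_two_players htwo,
    ← ConcGame.canAlwaysReply_iff_of_two_players htwo] at hdet ⊢
  exact stmt1_general G pA (htrans pA) htotal hnoeth s π (hdet s π).2
end

section
/- Let G be a concurrent game, s a state, and A_i ≠ A_j two players. Let π and ρ be plays from s with ρ ≼_{A_i} π. Let E(G,A_i,A_j,ρ) be the game extending G with two new states s₀ and s₁, where from s₀ the players A_i and A_j concurrently choose actions in {1,2} (all other players have a single action): equal choices lead to the sink s₁ (which loops on itself) and unequal choices lead to s; the preference of A_j in E(G,A_i,A_j,ρ) satisfies s₀·s₁^ω ≺_{A_j} s₀·π' for every play π' of G from s, and s₀·π' ≼_{A_j} s₀·π'' iff π' ≼_{A_j} π''; for every other player A_k (including A_i), s₀·π' ≼_{A_k} s₀·π'' iff π' ≼_{A_k} π'' and s₀·s₁^ω ∼_{A_k} s₀·ρ. Then: if there is a Nash equilibrium in G from s with outcome π, there is a Nash equilibrium in E(G,A_i,A_j,ρ) from s₀ with outcome s₀·π; and conversely, if there is a Nash equilibrium in E(G,A_i,A_j,ρ) from s₀ with outcome s₀·π, then there is a Nash equilibrium in G from s with outcome π. -/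
/-- States of the extended game: a fresh initial state `start`, a sink `sink`,
and the states of the original game. -/
inductive ExtSt (Stat : Type) where
  | start : ExtSt Stat
  | sink : ExtSt Stat
  | old : Stat → ExtSt Stat

/-- Actions of the extended game: original actions plus the two
matching-penny actions `1, 2` (modelled as `Fin 2`). -/
abbrev ExtAct (Act : Type) := Act ⊕ Fin 2

/-- Turn an extended move into a move of the original game at state `t`
(extended actions are replaced by some allowed action). -/
noncomputable def unlift {Stat Agt Act : Type} (G : ConcGame Stat Agt Act) (t : Stat)
    (m : Agt → ExtAct Act) (A : Agt) : Act :=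
  match m A with
  | Sum.inl a => a
  | Sum.inr _ => (G.Allow_nonempty t A).choose

-- Transition table of the extended game: from `start`, equal choices of the
-- two distinguished players lead to the sink, unequal choices lead to `s`;
-- the sink loops; elsewhere the original game is played.
open Classical in
noncomputable def extTab {Stat Agt Act : Type} (G : ConcGame Stat Agt Act) (s : Stat)
    (pA pB : Agt) : ExtSt Stat → (Agt → ExtAct Act) → ExtSt Stat
  | ExtSt.start, m => if m pA = m pB then ExtSt.sink else ExtSt.old s
  | ExtSt.sink, _ => ExtSt.sink
  | ExtSt.old t, m => ExtSt.old (G.Tab t (unlift G t m))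

/-- The play `s₀ · π'` of the extended game, for `π'` a play of `G`. -/
def extPlay {Stat : Type} (χ : ℕ → Stat) : ℕ → ExtSt Stat
  | 0 => ExtSt.start
  | n + 1 => ExtSt.old (χ n)

/-- The play `s₀ · s₁^ω` of the extended game. -/
def sinkPlay {Stat : Type} : ℕ → ExtSt Stat
  | 0 => ExtSt.start
  | _ + 1 => ExtSt.sink

/-- Allowed actions in the extended game `E(G,Ai,Aj,ρ)`: at `start`, the two
distinguished players choose in `{1,2}` while every other player has a single
action; elsewhere the original allowed actions. -/
def extAllow3 {Stat Agt Act : Type} [DecidableEq Agt] (G : ConcGame Stat Agt Act)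
    (Ai Aj : Agt) : ExtSt Stat → Agt → Set (ExtAct Act)
  | ExtSt.start, C =>
      if C = Ai ∨ C = Aj then Set.range (Sum.inr : Fin 2 → ExtAct Act)
      else {Sum.inr 0}
  | ExtSt.sink, _ => {Sum.inr 0}
  | ExtSt.old t, C => Sum.inl '' G.Allow t C

/-- The extended game `E(G,Ai,Aj,ρ)` (its preference relations are a parameter). -/
noncomputable def extGame3 {Stat Agt Act : Type} [DecidableEq Agt]
    (G : ConcGame Stat Agt Act) (s : Stat) (Ai Aj : Agt)
    (pref' : Agt → (ℕ → ExtSt Stat) → (ℕ → ExtSt Stat) → Prop) :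
    ConcGame (ExtSt Stat) Agt (ExtAct Act) where
  Allow := extAllow3 G Ai Aj
  Allow_nonempty := by
    intro t A
    cases t with
    | start =>
        simp only [extAllow3]
        split
        · exact ⟨Sum.inr 0, Set.mem_range_self 0⟩
        · exact ⟨Sum.inr 0, Set.mem_singleton _⟩
    | sink => exact ⟨Sum.inr 0, Set.mem_singleton _⟩
    | old t => exact (G.Allow_nonempty t A).image Sum.inl
  Tab := extTab G s Ai Aj
  pref := pref'

/-!
A profile of `E(G,Ai,Aj,ρ)` has outcome `s₀ · π` exactly when `Ai` and `Aj` choose different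
actions at `s₀` and what the profile prescribes after `s₀` has outcome `π` in `G`. A deviation that
keeps the two choices different is a deviation in `G`, and every deviation in `G` arises in this
way. Any other deviation leads to the sink; only `Ai` and `Aj` have such deviations, and neither
gains by them: `s₀ · s₁^ω` is worse than `s₀ · π` for `Aj`, and for `Ai` it is equivalent to
`s₀ · ρ`, with `ρ ≼_{Ai} π`.
-/

theorem extPlay_injective {Stat : Type} : Function.Injective (extPlay (Stat := Stat)) :=
  fun _ _ h ↦ funext fun n ↦ ExtSt.old.inj (congrFun h (n + 1))

theorem sinkPlay_ne_extPlay {Stat : Type} (χ : ℕ → Stat) : sinkPlay ≠ extPlay χ :=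
  fun h ↦ nomatch congrFun h 1

namespace ConcGame

variable {Stat Agt Act : Type}

/-- The play `π` is the outcome of a Nash equilibrium of `G` from `s`. -/
def IsNashOutcome [DecidableEq Agt] (G : ConcGame Stat Agt Act) (s : Stat) (π : ℕ → Stat) : Prop :=
  ∃ σ, G.IsNash s σ ∧ ∀ n, G.outcome σ s n = π n

/-- The relations `pref'` on plays of the extended game extend the preferences of `G`: they compare
`s₀ · χ` and `s₀ · χ'` the way `G` compares the plays `χ` and `χ'` from `s`. -/
def ExtendsPref (G : ConcGame Stat Agt Act) (s : Stat)
    (pref' : Agt → (ℕ → ExtSt Stat) → (ℕ → ExtSt Stat) → Prop) : Prop :=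
  ∀ C, ∀ χ χ' : ℕ → Stat, χ 0 = s → χ' 0 = s →
    (pref' C (extPlay χ) (extPlay χ') ↔ G.pref C χ χ')

theorem ExtendsPref.pref_outcome_iff {G : ConcGame Stat Agt Act} {s : Stat}
    {pref' : Agt → (ℕ → ExtSt Stat) → (ℕ → ExtSt Stat) → Prop} (hpref : G.ExtendsPref s pref')
    (C : Agt) (σ₁ σ₂ : Agt → List Stat → Stat → Act) :
    pref' C (extPlay (G.outcome σ₁ s)) (extPlay (G.outcome σ₂ s)) ↔
      G.pref C (G.outcome σ₁ s) (G.outcome σ₂ s) :=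
  hpref C _ _ rfl rfl

/-- The part of a history of the extended game that lies in the original game. It lets
a strategy of `G` be followed in the extended game. -/
def oldPart (h : List (ExtSt Stat)) : List Stat :=
  h.filterMap fun
    | .old t => some t
    | _ => none

theorem oldPart_start_cons_map_old (h : List Stat) : oldPart (.start :: h.map .old) = h := by
  simp [oldPart, List.filterMap_map]

/-- The strategy of `A` in `G` that plays as `τ` does in the extended game after the initial
state `s₀`, reading each history of `G` as its continuation of `s₀`. -/
noncomputable def projStrategy (G : ConcGame Stat Agt Act) (A : Agt)
    (τ : List (ExtSt Stat) → ExtSt Stat → ExtAct Act) : List Stat → Stat → Act :=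
  fun h t ↦ unlift G t (fun _ ↦ τ (.start :: h.map .old) (.old t)) A

/-- The profile of `G` that plays as `σ'` does in the extended game after the initial state `s₀`.
It turns equilibria of the extended game into equilibria of `G`. -/
noncomputable def projProfile (G : ConcGame Stat Agt Act)
    (σ' : Agt → List (ExtSt Stat) → ExtSt Stat → ExtAct Act) : Agt → List Stat → Stat → Act :=
  fun C ↦ G.projStrategy C (σ' C)

/-- The strategy of the extended game that plays `a` at `s₀` and then follows the strategy `τ`
of `G`; at the sink the only allowed action is `Sum.inr 0`. -/
def liftStrategy (a : ExtAct Act) (τ : List Stat → Stat → Act) :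
    List (ExtSt Stat) → ExtSt Stat → ExtAct Act
  | _, .start => a
  | _, .sink => .inr 0
  | h, .old t => .inl (τ (oldPart h) t)

/-- The profile of the extended game in which `Aj` chooses differently from all the other players
at `s₀`, and which then follows the profile `σ` of `G`. It turns equilibria of `G` into equilibria
of the extended game. -/
def liftProfile [DecidableEq Agt] (Aj : Agt) (σ : Agt → List Stat → Stat → Act) :
    Agt → List (ExtSt Stat) → ExtSt Stat → ExtAct Act :=
  fun C ↦ liftStrategy (.inr (if C = Aj then 1 else 0)) (σ C)

theorem projStrategy_liftStrategy (G : ConcGame Stat Agt Act) (A : Agt) (a : ExtAct Act)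
    (τ : List Stat → Stat → Act) : G.projStrategy A (liftStrategy a τ) = τ := by
  funext h t
  simp only [projStrategy, unlift, liftStrategy, oldPart_start_cons_map_old]

section DecidableEq

variable [DecidableEq Agt]

theorem projProfile_liftProfile (G : ConcGame Stat Agt Act) (Aj : Agt)
    (σ : Agt → List Stat → Stat → Act) : G.projProfile (liftProfile Aj σ) = σ :=
  funext fun C ↦ G.projStrategy_liftStrategy C _ (σ C)

theorem projProfile_update (G : ConcGame Stat Agt Act)
    (σ' : Agt → List (ExtSt Stat) → ExtSt Stat → ExtAct Act) (A : Agt)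
    (τ : List (ExtSt Stat) → ExtSt Stat → ExtAct Act) :
    G.projProfile (Function.update σ' A τ) =
      Function.update (G.projProfile σ') A (G.projStrategy A τ) :=
  funext fun C ↦ Function.apply_update (fun C ↦ G.projStrategy C) σ' A τ C

theorem update_liftStrategy_start (σ' : Agt → List (ExtSt Stat) → ExtSt Stat → ExtAct Act)
    (A : Agt) (τ : List Stat → Stat → Act) (C : Agt) :
    Function.update σ' A (liftStrategy (σ' A [] .start) τ) C [] .start = σ' C [] .start := by
  obtain rfl | hC := eq_or_ne C A
  · rw [Function.update_self, liftStrategy]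
  · rw [Function.update_of_ne hC]

theorem eq_or_eq_of_update_start_eq {Ai Aj A : Agt}
    {σ' : Agt → List (ExtSt Stat) → ExtSt Stat → ExtAct Act}
    {τ : List (ExtSt Stat) → ExtSt Stat → ExtAct Act}
    (hne : σ' Ai [] .start ≠ σ' Aj [] .start)
    (heq : Function.update σ' A τ Ai [] .start = Function.update σ' A τ Aj [] .start) :
    A = Ai ∨ A = Aj := by
  by_contra! hA
  rw [Function.update_of_ne hA.1.symm, Function.update_of_ne hA.2.symm] at heq
  exact hne heq

variable {G : ConcGame Stat Agt Act} {s : Stat} {Ai Aj : Agt}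
  {pref' : Agt → (ℕ → ExtSt Stat) → (ℕ → ExtSt Stat) → Prop}
  {σ' : Agt → List (ExtSt Stat) → ExtSt Stat → ExtAct Act}

theorem IsStrategy.proj {A : Agt} {τ : List (ExtSt Stat) → ExtSt Stat → ExtAct Act}
    (hτ : (extGame3 G s Ai Aj pref').IsStrategy A τ) : G.IsStrategy A (G.projStrategy A τ) := by
  intro h t
  obtain ⟨a, ha, hτa⟩ := hτ (.start :: h.map .old) (.old t)
  simpa only [projStrategy, unlift, ← hτa] using ha

theorem IsStrategy.lift {A : Agt} {a : ExtAct Act} {τ : List Stat → Stat → Act}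
    (hτ : G.IsStrategy A τ) (ha : a ∈ extAllow3 G Ai Aj .start A) :
    (extGame3 G s Ai Aj pref').IsStrategy A (liftStrategy a τ)
  | _, .start => ha
  | _, .sink => Set.mem_singleton _
  | h, .old t => Set.mem_image_of_mem Sum.inl (hτ (oldPart h) t)

theorem IsProfile.lift {σ : Agt → List Stat → Stat → Act} (hσ : G.IsProfile σ) :
    (extGame3 G s Ai Aj pref').IsProfile (liftProfile Aj σ) := by
  refine fun C ↦ (hσ C).lift ?_
  by_cases hC : C = Ai ∨ C = Aj
  · simp [extAllow3, hC]
  · simp [extAllow3, not_or.1 hC]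

theorem extGame3_run_succ_of_ne (hne : σ' Ai [] .start ≠ σ' Aj [] .start) (n : ℕ) :
    (extGame3 G s Ai Aj pref').run σ' .start (n + 1) =
      (.old (G.run (G.projProfile σ') s n).1,
        .start :: (G.run (G.projProfile σ') s n).2.map .old) := by
  induction n with
  | zero => simp [run, extGame3, extTab, hne]
  | succ n ih =>
    rw [run, ih]
    simp only [run, extGame3, extTab, List.map_append, List.cons_append, List.map_cons,
      List.map_nil]
    rfl

theorem extGame3_outcome_of_ne (hne : σ' Ai [] .start ≠ σ' Aj [] .start) :
    (extGame3 G s Ai Aj pref').outcome σ' .start = extPlay (G.outcome (G.projProfile σ') s) := by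
  funext n
  cases n with
  | zero => rfl
  | succ n => rw [outcome, extGame3_run_succ_of_ne hne, extPlay, outcome]

theorem extGame3_outcome_of_eq (heq : σ' Ai [] .start = σ' Aj [] .start) :
    (extGame3 G s Ai Aj pref').outcome σ' .start = sinkPlay := by
  have h_sink (n : ℕ) : (extGame3 G s Ai Aj pref').outcome σ' .start (n + 1) = .sink := by
    induction n with
    | zero => exact if_pos heq
    | succ n ih =>
      rw [outcome] at ih ⊢
      rw [run, ih]
      rfl
  funext n
  cases n with
  | zero => rfl
  | succ n => exact h_sink n

theorem extGame3_outcome_eq_extPlay_iff {π : ℕ → Stat} :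
    (extGame3 G s Ai Aj pref').outcome σ' .start = extPlay π ↔
      σ' Ai [] .start ≠ σ' Aj [] .start ∧ G.outcome (G.projProfile σ') s = π := by
  by_cases heq : σ' Ai [] .start = σ' Aj [] .start
  · simp [extGame3_outcome_of_eq heq, heq, sinkPlay_ne_extPlay]
  · simp [extGame3_outcome_of_ne heq, heq, extPlay_injective.eq_iff]

theorem IsNash.of_projProfile (hpref : G.ExtendsPref s pref')
    (hσ' : (extGame3 G s Ai Aj pref').IsProfile σ') (hne : σ' Ai [] .start ≠ σ' Aj [] .start)
    (hi : pref' Ai sinkPlay (extPlay (G.outcome (G.projProfile σ') s)))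
    (hj : pref' Aj sinkPlay (extPlay (G.outcome (G.projProfile σ') s)))
    (hN : G.IsNash s (G.projProfile σ')) : (extGame3 G s Ai Aj pref').IsNash .start σ' := by
  refine ⟨hσ', fun A τ hτ ↦ ?_⟩
  change pref' A _ _
  rw [extGame3_outcome_of_ne hne]
  by_cases heq : Function.update σ' A τ Ai [] .start = Function.update σ' A τ Aj [] .start
  · rw [extGame3_outcome_of_eq heq]
    obtain rfl | rfl := eq_or_eq_of_update_start_eq hne heq
    · exact hi
    · exact hj
  · rw [extGame3_outcome_of_ne heq, projProfile_update, hpref.pref_outcome_iff]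
    exact hN.2 A _ hτ.proj

theorem IsNash.projProfile (hpref : G.ExtendsPref s pref')
    (hN : (extGame3 G s Ai Aj pref').IsNash .start σ')
    (hne : σ' Ai [] .start ≠ σ' Aj [] .start) : G.IsNash s (G.projProfile σ') := by
  refine ⟨fun A ↦ (hN.1 A).proj, fun A τ hτ ↦ ?_⟩
  let τ' : List (ExtSt Stat) → ExtSt Stat → ExtAct Act := liftStrategy (σ' A [] .start) τ
  have hne' : Function.update σ' A τ' Ai [] .start ≠ Function.update σ' A τ' Aj [] .start := by
    rwa [update_liftStrategy_start, update_liftStrategy_start]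
  have h_dev : pref' A _ _ := hN.2 A τ' (hτ.lift (hN.1 A [] .start))
  rwa [extGame3_outcome_of_ne hne, extGame3_outcome_of_ne hne', projProfile_update,
    projStrategy_liftStrategy, hpref.pref_outcome_iff] at h_dev

end DecidableEq

end ConcGame

theorem stmt3_general {Stat Agt Act : Type} [DecidableEq Agt] (G : ConcGame Stat Agt Act)
    {Ai Aj : Agt} (hij : Ai ≠ Aj) (s : Stat) (π : ℕ → Stat)
    (pref' : Agt → (ℕ → ExtSt Stat) → (ℕ → ExtSt Stat) → Prop) (hpref : G.ExtendsPref s pref')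
    (hi : pref' Ai sinkPlay (extPlay π)) (hj : pref' Aj sinkPlay (extPlay π)) :
    G.IsNashOutcome s π ↔
      (extGame3 G s Ai Aj pref').IsNashOutcome ExtSt.start (extPlay π) := by
  constructor
  · rintro ⟨σ, hN, h_out⟩
    obtain rfl : G.outcome σ s = π := funext h_out
    have hne : ConcGame.liftProfile Aj σ Ai [] .start ≠ ConcGame.liftProfile Aj σ Aj [] .start := by
      simp [ConcGame.liftProfile, ConcGame.liftStrategy, hij]
    have h_proj := G.projProfile_liftProfile Aj σ
    refine ⟨ConcGame.liftProfile Aj σ, ?_, congrFun ?_⟩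
    · apply ConcGame.IsNash.of_projProfile hpref hN.1.lift hne <;> rwa [h_proj]
    · exact ConcGame.extGame3_outcome_eq_extPlay_iff.2 ⟨hne, by rw [h_proj]⟩
  · rintro ⟨σ', hN, h_out⟩
    obtain ⟨hne, h_proj⟩ := ConcGame.extGame3_outcome_eq_extPlay_iff.1 (funext h_out)
    exact ⟨G.projProfile σ', hN.projProfile hpref hne, congrFun h_proj⟩

/-- Nash equilibria of `G` from `s` with outcome `π`
correspond to Nash equilibria of `E(G,Ai,Aj,ρ)` from `s₀` with outcome
`s₀ · π`, whenever `ρ ≼_{Ai} π`. -/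
theorem stmt3 {Stat Agt Act : Type} [DecidableEq Agt]
    (G : ConcGame Stat Agt Act) (Ai Aj : Agt) (hij : Ai ≠ Aj)
    (hrefl : ∀ C χ, G.pref C χ χ)
    (htrans : ∀ C χ₁ χ₂ χ₃, G.pref C χ₁ χ₂ → G.pref C χ₂ χ₃ → G.pref C χ₁ χ₃)
    (s : Stat) (π ρ : ℕ → Stat) (hπ : π 0 = s) (hρ : ρ 0 = s)
    (hρπ : G.pref Ai ρ π)
    -- the preference relations of the extended game E(G,Ai,Aj,ρ):
    (pref' : Agt → (ℕ → ExtSt Stat) → (ℕ → ExtSt Stat) → Prop)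
    (hrefl' : ∀ C χ, pref' C χ χ)
    (htrans' : ∀ C χ₁ χ₂ χ₃, pref' C χ₁ χ₂ → pref' C χ₂ χ₃ → pref' C χ₁ χ₃)
    (hj1 : ∀ χ : ℕ → Stat, χ 0 = s →
      pref' Aj sinkPlay (extPlay χ) ∧ ¬ pref' Aj (extPlay χ) sinkPlay)
    (hj2 : ∀ χ χ' : ℕ → Stat, χ 0 = s → χ' 0 = s →
      (pref' Aj (extPlay χ) (extPlay χ') ↔ G.pref Aj χ χ'))
    (hk1 : ∀ C, C ≠ Aj → ∀ χ χ' : ℕ → Stat, χ 0 = s → χ' 0 = s →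
      (pref' C (extPlay χ) (extPlay χ') ↔ G.pref C χ χ'))
    (hk2 : ∀ C, C ≠ Aj →
      pref' C sinkPlay (extPlay ρ) ∧ pref' C (extPlay ρ) sinkPlay) :
    ((∃ σ, G.IsNash s σ ∧ ∀ n, G.outcome σ s n = π n) →
      ∃ σ', (extGame3 G s Ai Aj pref').IsNash ExtSt.start σ' ∧
        ∀ n, (extGame3 G s Ai Aj pref').outcome σ' ExtSt.start n = extPlay π n) ∧
    ((∃ σ', (extGame3 G s Ai Aj pref').IsNash ExtSt.start σ' ∧
        ∀ n, (extGame3 G s Ai Aj pref').outcome σ' ExtSt.start n = extPlay π n) →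
      ∃ σ, G.IsNash s σ ∧ ∀ n, G.outcome σ s n = π n) :=
  iff_def.1 <| stmt3_general G hij s π pref'
    (fun C ↦ if hC : C = Aj then hC ▸ hj2 else hk1 C hC)
    (htrans' _ _ _ _ (hk2 Ai hij).1 ((hk1 Ai hij ρ π hρ hπ).2 hρπ)) (hj1 π hπ).1
end

section
/- Let G be a finite concurrent game and π a play in G, and let N = Σ_{s∈Stat} Π_{A∈Agt} |Allow(s,A)| be the number of entries of the transition table of G. Then the number of states of the suspect game H(G,π) reachable from the set Stat × {Agt} is at most (|Stat| + N)·(1 + (|Stat| + N)·N). -/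
/-- The set of suspect players for the transition `(s, s')` and the move `m`. -/
def Susp {Stat Agt Act : Type} [DecidableEq Agt] (G : ConcGame Stat Agt Act)
    (s s' : Stat) (m : Agt → Act) : Set Agt :=
  {A | ∃ a ∈ G.Allow s A, G.Tab s (Function.update m A a) = s'}

/-- States of the suspect game: Eve's states `Stat × 2^Agt` and Adam's states
`Stat × 2^Agt × Act^Agt`. -/
abbrev SGState (Stat Agt Act : Type) :=
  (Stat × Set Agt) ⊕ (Stat × Set Agt × (Agt → Act))

/-- The transition relation of the suspect game: from an Eve state, Eve picks a
legal move; from an Adam state, Adam picks any state and the suspect set is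
updated. -/
def SGStep {Stat Agt Act : Type} [DecidableEq Agt] (G : ConcGame Stat Agt Act) :
    SGState Stat Agt Act → SGState Stat Agt Act → Prop
  | Sum.inl q, Sum.inr a => a.1 = q.1 ∧ a.2.1 = q.2 ∧ G.Legal q.1 a.2.2
  | Sum.inr a, Sum.inl q => q.2 = a.2.1 ∩ Susp G a.1 q.1 a.2.2
  | _, _ => False

/-!
A player's choices only matter at a state where she has at least two of them. If Adam follows Eve's
legal move from `s`, every player is a suspect and the suspect set is unchanged; if he leaves it,
only players with at least two actions at `s` can be to blame. Hence every reachable suspect set is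
either `Agt` or a set `P` of players all having a choice at some common state `s`. Fixing a default
action for each player, such a `P` is the set of players deviating from the default in a suitable
move at `s`, so there are at most `1 + N` reachable suspect sets. A reachable state consists of such
a suspect set together with a state or an entry of the transition table, which gives the bound
`(|Stat| + N) * (1 + N)`.
-/

open Set
open scoped Cardinal

theorem exists_setOf_ne_eq {ι : Type*} {β : ι → Type*} (b : ∀ i, β i) {P : Set ι}
    (hP : ∀ i ∈ P, Nontrivial (β i)) : ∃ m : ∀ i, β i, {i | m i ≠ b i} = P := by
  have coordinate (i : ι) : ∃ a : β i, a ≠ b i ↔ i ∈ P := by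
    by_cases hi : i ∈ P
    · have := hP i hi
      exact (exists_ne (b i)).imp fun a ha => iff_of_true ha hi
    · exact ⟨b i, iff_of_false (not_not_intro rfl) hi⟩
  choose m hm using coordinate
  exact ⟨m, Set.ext hm⟩

theorem add_mul_one_add_le (a b : ℕ) : (a + b) * (1 + b) ≤ (a + b) * (1 + (a + b) * b) := by
  gcongr
  calc b ≤ b * b := Nat.le_mul_self b
    _ ≤ (a + b) * b := by gcongr; exact Nat.le_add_left b a

namespace ConcGame

variable {Stat Agt Act : Type} (G : ConcGame Stat Agt Act)

/-- The entries of the transition table of `G`: a state together with a legal move there. They are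
a dependent sum of products so that counting them gives the number `N` of the theorem. -/
abbrev Entry : Type := Σ s : Stat, ∀ A : Agt, G.Allow s A

/-- The players having a choice, that is, at least two allowed actions, at the state `s`. Only these
can be suspects after a deviation from a legal move at `s`. -/
def choosers (s : Stat) : Set Agt := {A | (G.Allow s A).Nontrivial}

/-- The sets of players that can occur as suspect sets of reachable states: everybody, or players
that all have a choice at one common state. -/
def suspectSets : Set (Set Agt) := insert univ (⋃ s, 𝒫 (G.choosers s))

/-- The state of the suspect game with suspect set `P` at a state of `G` (a state of Eve) or at an
entry of the transition table (a state of Adam). Every reachable state arises like this. -/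
def suspectState : (Stat ⊕ G.Entry) × G.suspectSets → SGState Stat Agt Act
  | (.inl s, P) => .inl (s, P)
  | (.inr e, P) => .inr (e.1, P, fun A => e.2 A)

section Reachability

variable [DecidableEq Agt] {G} {s s' : Stat} {m : Agt → Act}

theorem Legal.susp_tab (hm : G.Legal s m) : Susp G s (G.Tab s m) m = univ :=
  eq_univ_of_forall fun A => ⟨m A, hm A, by rw [Function.update_eq_self]⟩

theorem Legal.susp_subset_choosers (hm : G.Legal s m) (hs' : G.Tab s m ≠ s') :
    Susp G s s' m ⊆ G.choosers s := by
  rintro A ⟨a, ha, rfl⟩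
  refine nontrivial_of_mem_mem_ne (hm A) ha ?_
  rintro rfl
  exact hs' (by rw [Function.update_eq_self])

theorem Legal.inter_susp_mem_suspectSets (hm : G.Legal s m) {P : Set Agt}
    (hP : P ∈ G.suspectSets) : P ∩ Susp G s s' m ∈ G.suspectSets := by
  obtain rfl | hs' := eq_or_ne (G.Tab s m) s'
  · rwa [hm.susp_tab, inter_univ]
  · exact .inr <| mem_iUnion_of_mem s <| inter_subset_right.trans (hm.susp_subset_choosers hs')

theorem mem_range_suspectState_of_step {x y : SGState Stat Agt Act}
    (hx : x ∈ range G.suspectState) (hxy : SGStep G x y) : y ∈ range G.suspectState := by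
  obtain ⟨⟨s | ⟨s, m⟩, P, hP⟩, rfl⟩ := hx <;> rcases y with ⟨s', Q⟩ | ⟨s', Q, m'⟩
  · exact hxy.elim
  · obtain ⟨rfl, rfl, hm'⟩ := hxy
    exact ⟨(.inr ⟨s', fun A => ⟨m' A, hm' A⟩⟩, ⟨Q, hP⟩), rfl⟩
  · obtain rfl : Q = P ∩ Susp G s s' (fun A => m A) := hxy
    have hm : G.Legal s fun A => m A := fun A => (m A).2
    exact ⟨(.inl s', ⟨_, hm.inter_susp_mem_suspectSets hP⟩), rfl⟩
  · exact hxy.elim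

theorem mem_range_suspectState_of_reachable {x : SGState Stat Agt Act}
    (hx : Relation.ReflTransGen (SGStep G) (.inl (s, univ)) x) : x ∈ range G.suspectState := by
  induction hx with
  | refl => exact ⟨(.inl s, ⟨univ, mem_insert _ _⟩), rfl⟩
  | tail _ hxy ih => exact mem_range_suspectState_of_step ih hxy

end Reachability

theorem mk_powerset_choosers_le (s : Stat) : #(𝒫 (G.choosers s)) ≤ #(∀ A, G.Allow s A) := by
  let b (A : Agt) : G.Allow s A := (G.Allow_nonempty s A).to_subtype.some
  have powerset_subset : 𝒫 (G.choosers s) ⊆ range fun m : ∀ A, G.Allow s A => {A | m A ≠ b A} :=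
    fun _ hP => exists_setOf_ne_eq b fun _ hA => (hP hA).coe_sort
  exact (Cardinal.mk_le_mk_of_subset powerset_subset).trans Cardinal.mk_range_le

theorem mk_suspectSets_le : #G.suspectSets ≤ 1 + #G.Entry :=
  calc #G.suspectSets
    _ ≤ #(⋃ s, 𝒫 (G.choosers s)) + 1 := Cardinal.mk_insert_le
    _ ≤ (Cardinal.sum fun s => #(𝒫 (G.choosers s))) + 1 := by
      gcongr; exact Cardinal.mk_iUnion_le_sum_mk
    _ ≤ (Cardinal.sum fun s => #(∀ A, G.Allow s A)) + 1 := by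
      gcongr with s; exact G.mk_powerset_choosers_le s
    _ = 1 + #G.Entry := by rw [Cardinal.mk_sigma, add_comm]

theorem mk_range_suspectState_le :
    #(range G.suspectState) ≤ (#Stat + #G.Entry) * (1 + #G.Entry) :=
  calc #(range G.suspectState)
    _ ≤ #((Stat ⊕ G.Entry) × G.suspectSets) := Cardinal.mk_range_le
    _ = (#Stat + #G.Entry) * #G.suspectSets := by
      simp only [Cardinal.mk_prod, Cardinal.mk_sum, Cardinal.lift_id]
    _ ≤ (#Stat + #G.Entry) * (1 + #G.Entry) := by gcongr; exact G.mk_suspectSets_le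

theorem mk_entry :
    #G.Entry = Cardinal.sum fun s => Cardinal.prod fun A => #(G.Allow s A) := by
  simp only [Cardinal.mk_sigma, Cardinal.mk_pi]

theorem natCast_sum_prod_ncard_allow [Fintype Stat] [Fintype Agt] [∀ s A, Finite (G.Allow s A)] :
    ((∑ s, ∏ A, (G.Allow s A).ncard : ℕ) : Cardinal.{0}) =
      Cardinal.sum fun s => Cardinal.prod fun A => #(G.Allow s A) := by
  rw [← G.mk_entry, ← Nat.cast_card]
  simp only [Nat.card_sigma, Nat.card_pi, Nat.card_coe_set_eq]

end ConcGame

theorem stmt6_general {Stat Agt Act : Type} [DecidableEq Agt] (G : ConcGame Stat Agt Act) :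
    #{x : SGState Stat Agt Act |
        ∃ s : Stat, Relation.ReflTransGen (SGStep G) (Sum.inl (s, Set.univ)) x} ≤
      (#Stat + Cardinal.sum fun s => Cardinal.prod fun A => #(G.Allow s A)) *
        (1 + Cardinal.sum fun s => Cardinal.prod fun A => #(G.Allow s A)) := by
  rw [← G.mk_entry]
  refine le_trans (Cardinal.mk_le_mk_of_subset ?_) G.mk_range_suspectState_le
  rintro x ⟨s, hx⟩
  exact ConcGame.mem_range_suspectState_of_reachable hx

/-- The number of states of the suspect game reachable from
`Stat × {Agt}` is at most `(|Stat| + N)·(1 + (|Stat| + N)·N)`, where `N` is the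
size of the transition table. -/
theorem stmt6 {Stat Agt Act : Type} [Fintype Stat] [Fintype Agt] [Fintype Act]
    [DecidableEq Agt] (G : ConcGame Stat Agt Act) :
    {x : SGState Stat Agt Act |
        ∃ s : Stat, Relation.ReflTransGen (SGStep G) (Sum.inl (s, Set.univ)) x}.ncard ≤
      (Fintype.card Stat + ∑ s : Stat, ∏ A : Agt, (G.Allow s A).ncard) *
        (1 + (Fintype.card Stat + ∑ s : Stat, ∏ A : Agt, (G.Allow s A).ncard) *
          (∑ s : Stat, ∏ A : Agt, (G.Allow s A).ncard)) := by
  refine le_trans (Nat.cast_le (α := Cardinal.{0}).mp ?_) (add_mul_one_add_le _ _)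
  simpa only [Set.cast_ncard (Set.toFinite _), Nat.cast_mul, Nat.cast_add, Nat.cast_one,
    G.natCast_sum_prod_ncard_allow, Cardinal.mk_fintype] using stmt6_general G
end
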